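/- Let 3 ≤ k ≤ n−1 and 1 ≤ h ≤ n−k. Let S be a minimum h-super vertex-cut of S_{n,k}, let X be the vertex set of a connected component of S_{n,k}−S, and fix t with 2 ≤ t ≤ k. With Y = V(S_{n,k}) \ (S ∪ X), X_i = X ∩ V(S^{t:i}_{n−1,k−1}), Y_i = Y ∩ V(S^{t:i}_{n−1,k−1}), and J′ = { i ∈ {1,…,n} : X_i ≠ ∅ and Y_i ≠ ∅ }, it holds that κ_s^{(h)}(S_{n,k}) ≥ |J′| · κ_s^{(h−1)}(S_{n−1,k−1}). -/

import Mathlib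

/-!
For `i ∈ J'`, the slice of vertices whose `t`-th bit is `i` is a copy of `S_{n-1,k-1}`, via the
embedding `sliceEmb t i`. The trace of `S` on that slice is an `(h-1)`-super vertex-cut of the copy:

* it separates a vertex of `X` from a vertex outside `S ∪ X`, since a path in the slice avoiding
  `S` is a path of `S_{n,k} - S`, and `X` is a whole component of the latter;
* a vertex has exactly one neighbour outside its slice (swap the first and the `t`-th bit), so
  restricting to the slice lowers degrees by at most one.

Hence `S` has at least `κ_s^{(h-1)}(S_{n-1,k-1})` elements in each slice indexed by `J'`. The slices
are disjoint, so summing over `J'` bounds `|S| = κ_s^{(h)}(S_{n,k})` from below.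
-/


/-- A vertex of the `(n,k)`-star graph: a `k`-permutation of `{1,…,n}`,
encoded as an injective function `Fin k → Fin n`. -/
def NKVertex (n k : ℕ) : Type := {p : Fin k → Fin n // Function.Injective p}

/-- `SwapRel p q` : `q` is obtained from `p` by swapping the first bit with the
`i`-th bit for some `i ≠ 1` (a swap-edge). -/
def SwapRel {n k : ℕ} (p q : NKVertex n k) : Prop :=
  ∃ (hk : 0 < k) (i : Fin k), (i : ℕ) ≠ 0 ∧ q.1 = p.1 ∘ Equiv.swap ⟨0, hk⟩ i

/-- `UnswapRel p q` : `q` is obtained from `p` by replacing the first bit by a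
symbol not occurring in `p` (an unswap-edge). -/
def UnswapRel {n k : ℕ} (p q : NKVertex n k) : Prop :=
  ∃ (hk : 0 < k), (∀ j : Fin k, (j : ℕ) ≠ 0 → q.1 j = p.1 j) ∧ q.1 ⟨0, hk⟩ ∉ Set.range p.1

/-- The `(n,k)`-star graph `S_{n,k}`. -/
def nkStar (n k : ℕ) : SimpleGraph (NKVertex n k) :=
  SimpleGraph.fromRel (fun p q => SwapRel p q ∨ UnswapRel p q)

/-- `S` is an `h`-super vertex-cut of `G`: `G − S` is disconnected and every
vertex of `G − S` has degree at least `h` in `G − S`. -/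
def IsHSuperCut {V : Type*} (G : SimpleGraph V) (h : ℕ) (S : Set V) : Prop :=
  ¬ (G.induce Sᶜ).Connected ∧ ∀ v ∈ Sᶜ, h ≤ (G.neighborSet v ∩ Sᶜ).ncard

/-- The `h`-super connectivity `κ_s^{(h)}(G)`: the minimum cardinality of an
`h`-super vertex-cut of `G`. -/
noncomputable def hSuperConn {V : Type*} (G : SimpleGraph V) (h : ℕ) : ℕ :=
  sInf (Set.ncard '' {S : Set V | IsHSuperCut G h S})

instance NKVertex.instFinite (n k : ℕ) : Finite (NKVertex n k) :=
  inferInstanceAs (Finite {p : Fin k → Fin n // Function.Injective p})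

theorem SwapRel.symm {n k : ℕ} {p q : NKVertex n k} (hpq : SwapRel p q) : SwapRel q p := by
  obtain ⟨hk, i, hi, e⟩ := hpq
  refine ⟨hk, i, hi, ?_⟩
  rw [e]
  funext a
  simp

theorem UnswapRel.symm {n k : ℕ} {p q : NKVertex n k} (hpq : UnswapRel p q) : UnswapRel q p := by
  obtain ⟨hk, e, hq⟩ := hpq
  refine ⟨hk, fun j hj => (e j hj).symm, ?_⟩
  rintro ⟨j, hj⟩
  by_cases hj0 : (j : ℕ) = 0
  · obtain rfl : j = ⟨0, hk⟩ := Fin.ext hj0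
    exact hq ⟨_, hj.symm⟩
  · rw [e j hj0] at hj
    exact hj0 (congrArg Fin.val (p.2 hj))

/-- Both relations are symmetric and irreflexive, so the symmetrization and the removal of loops
in `SimpleGraph.fromRel` change nothing. -/
theorem nkStar_adj {n k : ℕ} {p q : NKVertex n k} :
    (nkStar n k).Adj p q ↔ SwapRel p q ∨ UnswapRel p q := by
  unfold nkStar
  rw [SimpleGraph.fromRel_adj]
  constructor
  · rintro ⟨-, h | h⟩
    · exact h
    · exact h.imp SwapRel.symm UnswapRel.symm
  · intro h
    refine ⟨?_, Or.inl h⟩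
    rintro rfl
    rcases h with ⟨hk, i, hi, e⟩ | ⟨hk, -, hq⟩
    · have h1 := congrFun e i
      simp only [Function.comp_apply, Equiv.swap_apply_right] at h1
      exact hi (congrArg Fin.val (p.2 h1))
    · exact hq ⟨_, rfl⟩

/-- The copy of `S_{n-1,k-1}` inside `S_{n,k}` formed by the vertices with `t`-th bit `i`: insert
the symbol `i` at position `t` and relabel the other symbols so as to skip `i`. -/
def sliceEmb {m l : ℕ} (t : Fin (l + 1)) (i : Fin (m + 1)) (p : NKVertex m l) :
    NKVertex (m + 1) (l + 1) :=
  ⟨t.insertNth i (fun j => i.succAbove (p.1 j)), by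
    intro a b
    induction a using Fin.succAboveCases t with
    | x =>
      induction b using Fin.succAboveCases t with
      | x => simp
      | p b => simp
    | p a =>
      induction b using Fin.succAboveCases t with
      | x => simp
      | p b =>
        intro hab
        simp only [Fin.insertNth_apply_succAbove] at hab
        rw [p.2 (Fin.succAbove_right_injective hab)]⟩

section Slice

variable {m l : ℕ} {t : Fin (l + 1)} {i : Fin (m + 1)}

theorem sliceEmb_same (p : NKVertex m l) : (sliceEmb t i p).1 t = i := by
  simp [sliceEmb]

theorem sliceEmb_succAbove (p : NKVertex m l) (j : Fin l) :
    (sliceEmb t i p).1 (t.succAbove j) = i.succAbove (p.1 j) := by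
  simp [sliceEmb]

theorem sliceEmb_injective : Function.Injective (sliceEmb (m := m) t i) := by
  intro p q hpq
  refine Subtype.ext (funext fun j => ?_)
  apply Fin.succAbove_right_injective (p := i)
  rw [← sliceEmb_succAbove (t := t), ← sliceEmb_succAbove (t := t), hpq]

theorem exists_sliceEmb (x : NKVertex (m + 1) (l + 1)) (hx : x.1 t = i) :
    ∃ p, sliceEmb t i p = x := by
  have hne : ∀ j : Fin l, ∃ b, i.succAbove b = x.1 (t.succAbove j) := by
    intro j
    apply Fin.exists_succAbove_eq
    rw [← hx]
    exact fun e => Fin.succAbove_ne t j (x.2 e)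
  choose f hf using hne
  refine ⟨⟨f, ?_⟩, ?_⟩
  · intro a b hab
    have : x.1 (t.succAbove a) = x.1 (t.succAbove b) := by rw [← hf, ← hf, hab]
    exact Fin.succAbove_right_injective (x.2 this)
  · refine Subtype.ext (funext fun a => ?_)
    induction a using Fin.succAboveCases t with
    | x => exact (sliceEmb_same _).trans hx.symm
    | p a => exact (sliceEmb_succAbove _ a).trans (hf a)

end Slice

section Adj

variable {m l : ℕ} {t : Fin (l + 2)} {i : Fin (m + 1)}

theorem succAbove_val_ne_zero (ht : t ≠ 0) {j : Fin (l + 1)} :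
    ((t.succAbove j : Fin (l + 2)) : ℕ) ≠ 0 ↔ (j : ℕ) ≠ 0 := by
  rw [Fin.val_ne_zero_iff, Fin.val_ne_zero_iff, ne_eq, ne_eq,
    Fin.succAbove_eq_zero_iff ht]

theorem swapRel_sliceEmb (ht : t ≠ 0) {p q : NKVertex m (l + 1)} :
    SwapRel (sliceEmb t i p) (sliceEmb t i q) ↔ SwapRel p q := by
  have h0 : (⟨0, Nat.succ_pos _⟩ : Fin (l + 2)) = t.succAbove 0 :=
    (Fin.succAbove_ne_zero_zero ht).symm
  have key : ∀ j' a : Fin (l + 1),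
      ((sliceEmb t i p).1 ∘ Equiv.swap (t.succAbove 0) (t.succAbove j')) (t.succAbove a) =
        i.succAbove ((p.1 ∘ Equiv.swap 0 j') a) := by
    intro j' a
    rw [Function.comp_apply, Function.Injective.swap_apply Fin.succAbove_right_injective,
      sliceEmb_succAbove]
    rfl
  constructor
  · rintro ⟨_, j, hj, e⟩
    rw [h0] at e
    induction j using Fin.succAboveCases t with
    | x =>
      have h1 := congrFun e t
      rw [Function.comp_apply, Equiv.swap_apply_right, sliceEmb_same, sliceEmb_succAbove] at h1
      exact absurd h1.symm (Fin.succAbove_ne _ _)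
    | p j =>
      refine ⟨Nat.succ_pos _, j, (succAbove_val_ne_zero ht).1 hj, funext fun a => ?_⟩
      have h1 := congrFun e (t.succAbove a)
      rw [key, sliceEmb_succAbove] at h1
      exact Fin.succAbove_right_injective h1
  · rintro ⟨_, j, hj, e⟩
    refine ⟨Nat.succ_pos _, t.succAbove j, (succAbove_val_ne_zero ht).2 hj, funext fun a => ?_⟩
    rw [h0]
    induction a using Fin.succAboveCases t with
    | x =>
      rw [Function.comp_apply, Equiv.swap_apply_of_ne_of_ne (Fin.succAbove_ne _ _).symm
        (Fin.succAbove_ne _ _).symm, sliceEmb_same, sliceEmb_same]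
    | p a =>
      rw [key, sliceEmb_succAbove, e]
      rfl

theorem unswapRel_sliceEmb (ht : t ≠ 0) {p q : NKVertex m (l + 1)} :
    UnswapRel (sliceEmb t i p) (sliceEmb t i q) ↔ UnswapRel p q := by
  have h0 : (⟨0, Nat.succ_pos _⟩ : Fin (l + 2)) = t.succAbove 0 :=
    (Fin.succAbove_ne_zero_zero ht).symm
  constructor
  · rintro ⟨_, e, hq⟩
    refine ⟨Nat.succ_pos _, fun j hj => ?_, ?_⟩
    · have h1 := e _ ((succAbove_val_ne_zero ht).2 hj)
      rw [sliceEmb_succAbove, sliceEmb_succAbove] at h1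
      exact Fin.succAbove_right_injective h1
    · rintro ⟨a, ha⟩
      refine hq ⟨t.succAbove a, ?_⟩
      rw [h0, sliceEmb_succAbove, sliceEmb_succAbove, ha]
      rfl
  · rintro ⟨_, e, hq⟩
    refine ⟨Nat.succ_pos _, fun j hj => ?_, ?_⟩
    · induction j using Fin.succAboveCases t with
      | x => rw [sliceEmb_same, sliceEmb_same]
      | p j =>
        rw [sliceEmb_succAbove, sliceEmb_succAbove, e j ((succAbove_val_ne_zero ht).1 hj)]
    · rintro ⟨a, ha⟩
      rw [h0, sliceEmb_succAbove] at ha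
      induction a using Fin.succAboveCases t with
      | x =>
        rw [sliceEmb_same] at ha
        exact Fin.succAbove_ne _ _ ha.symm
      | p a =>
        rw [sliceEmb_succAbove] at ha
        exact hq ⟨a, Fin.succAbove_right_injective ha⟩

theorem nkStar_adj_sliceEmb (ht : t ≠ 0) {p q : NKVertex m (l + 1)} :
    (nkStar (m + 1) (l + 2)).Adj (sliceEmb t i p) (sliceEmb t i q) ↔
      (nkStar m (l + 1)).Adj p q := by
  rw [nkStar_adj, nkStar_adj, swapRel_sliceEmb ht, unswapRel_sliceEmb ht]

/-- The only neighbour of `p` outside its own slice is `p` with first and `t`-th bit swapped. -/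
theorem eq_swap_of_adj {n : ℕ} (ht : t ≠ 0) {p q : NKVertex n (l + 2)}
    (hpq : (nkStar n (l + 2)).Adj p q) (hne : q.1 t ≠ p.1 t) :
    q = ⟨p.1 ∘ Equiv.swap 0 t, p.2.comp (Equiv.injective _)⟩ := by
  rcases nkStar_adj.1 hpq with ⟨hk, j, hj, e⟩ | ⟨hk, e, -⟩
  · by_cases hjt : t = j
    · subst hjt
      exact Subtype.ext e
    · refine absurd ?_ hne
      rw [e, Function.comp_apply]
      exact congrArg p.1 (Equiv.swap_apply_of_ne_of_ne ht hjt)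
  · exact absurd (e t (fun h0 => ht (Fin.ext h0))) hne

/-- If the slice with `t`-th bit `i` meets both the component `C` and the rest of `S_{n,k} - S`,
then the trace of `S` on it is an `(h-1)`-super vertex-cut. -/
theorem isHSuperCut_slice (ht : t ≠ 0) {h : ℕ} {S : Set (NKVertex (m + 1) (l + 2))}
    (hS : IsHSuperCut (nkStar (m + 1) (l + 2)) h S)
    (C : ((nkStar (m + 1) (l + 2)).induce Sᶜ).ConnectedComponent)
    (hXi : ((Subtype.val '' C.supp) ∩ {x | x.1 t = i}).Nonempty)
    (hYi : ((Sᶜ \ (Subtype.val '' C.supp)) ∩ {x | x.1 t = i}).Nonempty) :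
    IsHSuperCut (nkStar m (l + 1)) (h - 1) (sliceEmb t i ⁻¹' S) := by
  constructor
  · intro hconn
    obtain ⟨_, ⟨⟨x, hxS⟩, hxC, rfl⟩, hxi⟩ := hXi
    obtain ⟨y, ⟨hyS, hyX⟩, hyi⟩ := hYi
    obtain ⟨a, rfl⟩ := exists_sliceEmb x hxi
    obtain ⟨b, rfl⟩ := exists_sliceEmb y hyi
    let f : (nkStar m (l + 1)).induce (sliceEmb t i ⁻¹' S)ᶜ →g
        (nkStar (m + 1) (l + 2)).induce Sᶜ :=
      { toFun := fun v => ⟨sliceEmb t i v.1, v.2⟩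
        map_rel' := fun {u v} huv => (nkStar_adj_sliceEmb ht).2 huv }
    have hr := (hconn.preconnected ⟨a, hxS⟩ ⟨b, hyS⟩).map f
    refine hyX ⟨⟨_, hyS⟩, ?_, rfl⟩
    rw [SimpleGraph.ConnectedComponent.mem_supp_iff] at hxC ⊢
    rw [← hxC]
    exact SimpleGraph.ConnectedComponent.sound hr.symm
  · intro v hv
    have h1 := hS.2 (sliceEmb t i v) hv
    have hsub : (nkStar (m + 1) (l + 2)).neighborSet (sliceEmb t i v) ∩ Sᶜ ⊆
        insert ⟨(sliceEmb t i v).1 ∘ Equiv.swap 0 t,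
            (sliceEmb t i v).2.comp (Equiv.injective _)⟩
          (sliceEmb t i '' ((nkStar m (l + 1)).neighborSet v ∩ (sliceEmb t i ⁻¹' S)ᶜ)) := by
      rintro w ⟨hw, hwS⟩
      by_cases hwt : w.1 t = (sliceEmb t i v).1 t
      · rw [sliceEmb_same] at hwt
        obtain ⟨u, rfl⟩ := exists_sliceEmb w hwt
        exact Or.inr ⟨u, ⟨(nkStar_adj_sliceEmb ht).1 hw, hwS⟩, rfl⟩
      · exact Or.inl (eq_swap_of_adj ht hw hwt)
    have h2 := Set.ncard_le_ncard hsub (Set.toFinite _)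
    have h3 := h2.trans (Set.ncard_insert_le _ _)
    rw [Set.ncard_image_of_injective _ sliceEmb_injective] at h3
    omega

end Adj

/-- Counting a finite set `S` along the fibres of `f`. -/
theorem ncard_mul_le_of_fibres {α β : Type*} [Finite α] [Fintype β] (f : α → β) (S : Set α)
    (J : Set β) (c : ℕ) (hc : ∀ i ∈ J, c ≤ (S ∩ {x | f x = i}).ncard) :
    J.ncard * c ≤ S.ncard := by
  classical
  have := Fintype.ofFinite α
  rw [Set.ncard_eq_toFinset_card' S, Set.ncard_eq_toFinset_card' J,
    Finset.card_eq_sum_card_fiberwise (f := f) (t := Finset.univ) (fun _ _ => by simp),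
    ← smul_eq_mul]
  refine (Finset.card_nsmul_le_sum _ (fun i => (S.toFinset.filter (fun x => f x = i)).card) _
    fun i hi => ?_).trans (Finset.sum_le_sum_of_subset (Finset.subset_univ _))
  refine (hc i (by simpa using hi)).trans_eq ?_
  rw [Set.ncard_eq_toFinset_card']
  congr 1
  ext x
  simp

/-- Let `3 ≤ k ≤ n−1`, `1 ≤ h ≤ n−k`, let `S` be a minimum `h`-super vertex-cut
of `S_{n,k}`, let `X` be the vertex set of a connected component of
`S_{n,k} − S`, fix a position `t` with `2 ≤ t ≤ k` (encoded as `t : Fin k` with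
`1 ≤ t`), and let `J'` be the set of `i` such that both `X` and
`Y = V ∖ (S ∪ X)` meet the set of vertices with `t`-th bit `i`.  Then
`κ_s^{(h)}(S_{n,k}) ≥ |J'| ⬝ κ_s^{(h−1)}(S_{n−1,k−1})`. -/
theorem nkStar_superConn_lower (n k h : ℕ) (hk : 3 ≤ k) (hkn : k < n)
    (hh1 : 1 ≤ h) (hh : h ≤ n - k)
    (S : Set (NKVertex n k)) (hS : IsHSuperCut (nkStar n k) h S)
    (hSmin : S.ncard = hSuperConn (nkStar n k) h)
    (C : ((nkStar n k).induce Sᶜ).ConnectedComponent)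
    (X : Set (NKVertex n k)) (hX : X = Subtype.val '' C.supp)
    (t : Fin k) (ht : 1 ≤ (t : ℕ)) :
    {i : Fin n | (X ∩ {x : NKVertex n k | x.1 t = i}).Nonempty ∧
        ((Sᶜ \ X) ∩ {x : NKVertex n k | x.1 t = i}).Nonempty}.ncard *
      hSuperConn (nkStar (n - 1) (k - 1)) (h - 1) ≤
    hSuperConn (nkStar n k) h := by
  subst hX
  obtain ⟨m, rfl⟩ : ∃ m, n = m + 1 := ⟨n - 1, by omega⟩
  obtain ⟨l, rfl⟩ : ∃ l, k = l + 2 := ⟨k - 2, by omega⟩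
  have ht0 : t ≠ 0 := by
    rintro rfl
    simp at ht
  rw [← hSmin]
  refine ncard_mul_le_of_fibres (fun x : NKVertex (m + 1) (l + 2) => x.1 t) S _ _ ?_
  rintro i ⟨hXi, hYi⟩
  have hcut := isHSuperCut_slice ht0 hS C hXi hYi
  have hle : hSuperConn (nkStar m (l + 1)) (h - 1) ≤ (sliceEmb t i ⁻¹' S).ncard :=
    Nat.sInf_le ⟨_, hcut, rfl⟩
  refine hle.trans ?_
  rw [← Set.ncard_image_of_injective _ (sliceEmb_injective (t := t) (i := i))]
  refine Set.ncard_le_ncard ?_ (Set.toFinite _)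
  rintro _ ⟨p, hp, rfl⟩
  exact ⟨hp, sliceEmb_same p⟩
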